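/- arXiv:1506.06922 — 2 statements merged into one kernel-verified Lean document; each statement's English description precedes it below -/
import Mathlib

section
/- A continuous function f : (0,∞) → (0,∞) is operator monotone decreasing if and only if f is decreasing on (0,∞) and f(A !_t B) ≥ f(A) !_t f(B) for every n ∈ ℕ, all n×n positive definite complex matrices A, B, and every t ∈ [0,1]. -/
open Matrix
open scoped ComplexOrder

/-- The Loewner order on matrices: `A ≤ B` iff `B - A` is positive semidefinite. -/
def MLE {n : ℕ} (A B : Matrix (Fin n) (Fin n) ℂ) : Prop := (B - A).PosSemidef

/-- The `t`-weighted harmonic mean `A !_t B = ((1-t)A⁻¹ + tB⁻¹)⁻¹`. -/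
noncomputable def wharm {n : ℕ} (t : ℝ) (A B : Matrix (Fin n) (Fin n) ℂ) :
    Matrix (Fin n) (Fin n) ℂ := ((1 - t) • A⁻¹ + t • B⁻¹)⁻¹

/-- The `t`-weighted arithmetic mean `A ∇_t B = (1-t)A + tB`. -/
noncomputable def warith {n : ℕ} (t : ℝ) (A B : Matrix (Fin n) (Fin n) ℂ) :
    Matrix (Fin n) (Fin n) ℂ := (1 - t) • A + t • B

/-- Real powers of a matrix, via the continuous functional calculus. -/
noncomputable def mpow {n : ℕ} (A : Matrix (Fin n) (Fin n) ℂ) (r : ℝ) :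
    Matrix (Fin n) (Fin n) ℂ := cfc (fun x : ℝ => x ^ r) A

/-- The `t`-weighted geometric mean `A #_t B = A^{1/2} (A^{-1/2} B A^{-1/2})^t A^{1/2}`. -/
noncomputable def wgeom {n : ℕ} (t : ℝ) (A B : Matrix (Fin n) (Fin n) ℂ) :
    Matrix (Fin n) (Fin n) ℂ :=
  mpow A (1/2) * mpow (mpow A (-(1/2)) * B * mpow A (-(1/2))) t * mpow A (1/2)

/-- `f` is operator monotone (increasing): order preserving on positive definite
matrices of every size, via the continuous functional calculus. -/
def OperatorMonotone (f : ℝ → ℝ) : Prop :=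
  ∀ (n : ℕ) (A B : Matrix (Fin n) (Fin n) ℂ), A.PosDef → B.PosDef →
    MLE A B → MLE (cfc f A) (cfc f B)

/-- `f` is operator monotone decreasing: order reversing on positive definite
matrices of every size, via the continuous functional calculus. -/
def OperatorAntitone (f : ℝ → ℝ) : Prop :=
  ∀ (n : ℕ) (A B : Matrix (Fin n) (Fin n) ℂ), A.PosDef → B.PosDef →
    MLE A B → MLE (cfc f B) (cfc f A)

/-!
If `f` is operator monotone decreasing, then `g x = f x⁻¹` is operator monotone. For an isometry `V`
and `c > 1`, a positive definite `T` is dominated by a matrix which acts as `c • Vᴴ T V` on the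
range of `V` and as a large scalar on its orthogonal complement; hence `Vᴴ g(T) V ≤ g(c • Vᴴ T V)`.
Applied to a block diagonal `T`, this is the concavity of `g` up to the factor `c` in the argument.
Positivity of `g` then yields `g(c • A) ≤ c³ • g(A)`, and `c → 1` gives concavity itself. Evaluating
`g` at the inverses of `A` and `B` gives `f(A !_t B) ≥ f(A) ∇_t f(B) ≥ f(A) !_t f(B)`.

Conversely, if `A ≤ B`, then for every `t ∈ (0, 1]` there is `C ≤ B` with `A = B !_t C`. As `f` is
decreasing, `f(C)` is bounded below by a positive scalar independent of `t`, so letting `t → 0` in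
`f(A)⁻¹ ≤ (1 - t) f(B)⁻¹ + t f(C)⁻¹` gives `f(A)⁻¹ ≤ f(B)⁻¹`.
-/

section Order

open scoped MatrixOrder

theorem le_smul_mul_mul_add_smul_one_sub_mul_mul {R : Type*} [Ring R] [StarRing R] [PartialOrder R]
    [StarOrderedRing R] [Algebra ℝ R] [StarModule ℝ R] {p a : R} (hp : IsSelfAdjoint p)
    (ha : 0 ≤ a) {c : ℝ} (hc : 0 < c) :
    a ≤ (1 + c) • (p * a * p) + (1 + c⁻¹) • ((1 - p) * a * (1 - p)) := by
  have hsq : 0 ≤ c • ((p - c⁻¹ • (1 - p)) * a * (p - c⁻¹ • (1 - p))) := by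
    have hsa : IsSelfAdjoint (p - c⁻¹ • (1 - p)) :=
      hp.sub ((IsSelfAdjoint.all c⁻¹).smul ((IsSelfAdjoint.one R).sub hp))
    exact smul_nonneg hc.le (hsa.conjugate_nonneg ha)
  have hexpand : (1 + c) • (p * a * p) + (1 + c⁻¹) • ((1 - p) * a * (1 - p)) - a =
      c • ((p - c⁻¹ • (1 - p)) * a * (p - c⁻¹ • (1 - p))) := by
    set q := 1 - p with hq
    have hpq : a = p * a * p + p * a * q + q * a * p + q * a * q := by rw [hq]; noncomm_ring
    refine (congrArg (_ - ·) hpq).trans ?_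
    simp only [sub_mul, mul_sub, smul_mul_assoc, mul_smul_comm, smul_sub, smul_smul, add_smul,
      one_smul, mul_inv_cancel₀ hc.ne', mul_inv_cancel_left₀ hc.ne']
    abel
  rwa [← sub_nonneg, hexpand]

variable {m n 𝕜 : Type*} [RCLike 𝕜]

theorem posDef_of_le {A B : Matrix n n 𝕜} (hA : A.PosDef) (hAB : A ≤ B) : B.PosDef := by
  simpa using hA.add_posSemidef (le_iff.1 hAB)

theorem posDef_one_sub_smul_add_smul {A B : Matrix n n 𝕜} (hA : A.PosDef) (hB : B.PosDef)
    {t : ℝ} (ht : t ∈ Set.Icc (0 : ℝ) 1) : ((1 - t) • A + t • B).PosDef := by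
  rcases ht.1.eq_or_lt with rfl | ht₀
  · simpa using hA
  · exact .posSemidef_add (hA.posSemidef.smul (sub_nonneg.2 ht.2)) (hB.smul ht₀)

theorem exists_pos_le_smul_one [Finite n] [DecidableEq n] {A : Matrix n n 𝕜} (hA : A.IsHermitian) :
    ∃ b : ℝ, 0 < b ∧ A ≤ b • 1 := by
  have := Fintype.ofFinite n
  obtain ⟨b, hb⟩ := (finite_real_spectrum (A := A)).bddAbove
  refine ⟨max b 1, by positivity, ?_⟩
  rw [← Algebra.algebraMap_eq_smul_one, le_algebraMap_iff_spectrum_le hA]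
  exact fun x hx ↦ (hb hx).trans (le_max_left b 1)

theorem posDef_fromBlocks_diagonal [Finite m] [Finite n] {A : Matrix m m 𝕜} {B : Matrix n n 𝕜}
    (hA : A.PosDef) (hB : B.PosDef) : (fromBlocks A 0 0 B).PosDef := by
  classical
  have := Fintype.ofFinite m
  have := Fintype.ofFinite n
  have := hA.isUnit.invertible
  have hpsd : (fromBlocks A 0 0 B).PosSemidef := by
    simpa using (PosDef.fromBlocks₁₁ (0 : Matrix m n 𝕜) B hA).2 (by simpa using hB.posSemidef)
  exact hpsd.posDef_iff_isUnit.2 (isUnit_fromBlocks_zero₂₁.2 ⟨hA.isUnit, hB.isUnit⟩)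

-- The operator norm makes `Matrix n n ℂ` a C⋆-algebra without changing its entrywise topology.
open scoped Matrix.Norms.L2Operator in
instance orderClosedTopology_matrix [Finite n] : OrderClosedTopology (Matrix n n ℂ) := by
  classical
  have := Fintype.ofFinite n
  infer_instance

variable [Fintype m] [DecidableEq m] [Fintype n] [DecidableEq n]

theorem inv_inv_of_posDef {A : Matrix n n 𝕜} (hA : A.PosDef) : A⁻¹⁻¹ = A :=
  nonsing_inv_nonsing_inv _ ((isUnit_iff_isUnit_det _).1 hA.isUnit)

theorem exists_le_mul_smul_mul_add_smul_one_sub {T : Matrix m m 𝕜} (hT : T.PosSemidef)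
    {V : Matrix m n 𝕜} (hV : Vᴴ * V = 1) {c : ℝ} (hc : 1 < c) :
    ∃ K : ℝ, T ≤ V * (c • (Vᴴ * T * V)) * Vᴴ + K • (1 - V * Vᴴ) := by
  obtain ⟨b, -, hTb⟩ := exists_pos_le_smul_one hT.1
  set P := V * Vᴴ with hP
  have hPsa : IsSelfAdjoint P := isHermitian_mul_conjTranspose_self V
  have hPidem : IsIdempotentElem P := by
    rw [IsIdempotentElem, hP, Matrix.mul_assoc, ← Matrix.mul_assoc Vᴴ, hV, Matrix.one_mul]
  have hQ : (1 - P) * T * (1 - P) ≤ b • (1 - P) := by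
    simpa [hPidem.one_sub.eq] using ((IsSelfAdjoint.one _).sub hPsa).conjugate_le_conjugate hTb
  have hc' : 0 < c - 1 := sub_pos.2 hc
  refine ⟨(1 + (c - 1)⁻¹) * b, ?_⟩
  calc T ≤ (1 + (c - 1)) • (P * T * P) + (1 + (c - 1)⁻¹) • ((1 - P) * T * (1 - P)) :=
        le_smul_mul_mul_add_smul_one_sub_mul_mul hPsa hT.nonneg hc'
    _ ≤ (1 + (c - 1)) • (P * T * P) + (1 + (c - 1)⁻¹) • b • (1 - P) := by gcongr
    _ = V * (c • (Vᴴ * T * V)) * Vᴴ + ((1 + (c - 1)⁻¹) * b) • (1 - P) := by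
        simp only [add_sub_cancel, smul_smul, Matrix.mul_smul, Matrix.smul_mul, hP,
          Matrix.mul_assoc]

open scoped Matrix.Norms.L2Operator in
theorem inv_le_inv_of_posDef {A B : Matrix n n ℂ} (hA : A.PosDef) (hAB : A ≤ B) :
    B⁻¹ ≤ A⁻¹ := by
  simp only [nonsing_inv_eq_ringInverse]
  exact CStarAlgebra.ringInverse_le_ringInverse hAB (isStrictlyPositive_iff_posDef.2 hA)

open scoped Matrix.Norms.L2Operator in
theorem inv_one_sub_smul_add_smul_le {A B : Matrix n n ℂ} (hA : A.PosDef) (hB : B.PosDef)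
    {t : ℝ} (ht : t ∈ Set.Icc (0 : ℝ) 1) :
    ((1 - t) • A + t • B)⁻¹ ≤ (1 - t) • A⁻¹ + t • B⁻¹ := by
  simp only [nonsing_inv_eq_ringInverse]
  exact CStarAlgebra.convexOn_ringInverse.2 (isStrictlyPositive_iff_posDef.2 hA)
    (isStrictlyPositive_iff_posDef.2 hB) (sub_nonneg.2 ht.2) ht.1 (sub_add_cancel _ _)

end Order

section FunctionalCalculus

variable {m n : Type*} [Fintype m] [DecidableEq m] [Fintype n] [DecidableEq n]

theorem aeval_mul_eq_mul_aeval {R S : Type*} [CommSemiring R] [Semiring S] [Algebra R S]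
    (p : Polynomial R) {A : Matrix m m S} {B : Matrix n n S} {V : Matrix m n S}
    (hV : A * V = V * B) : p.aeval A * V = V * p.aeval B := by
  have hpow (k : ℕ) : A ^ k * V = V * B ^ k := by
    induction k with
    | zero => simp
    | succ k ih => rw [pow_succ, Matrix.mul_assoc, hV, ← Matrix.mul_assoc, ih, Matrix.mul_assoc,
        ← pow_succ]
  simp only [Polynomial.aeval_eq_sum_range, Matrix.sum_mul, Matrix.mul_sum, Matrix.smul_mul,
    Matrix.mul_smul, hpow]

variable {𝕜 : Type*} [RCLike 𝕜]

theorem cfc_mul_eq_mul_cfc (f : ℝ → ℝ) {A : Matrix m m 𝕜} {B : Matrix n n 𝕜} {V : Matrix m n 𝕜}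
    (hA : A.IsHermitian) (hB : B.IsHermitian) (hV : A * V = V * B) :
    cfc f A * V = V * cfc f B := by
  let s := (finite_real_spectrum (A := A)).toFinset ∪ (finite_real_spectrum (A := B)).toFinset
  let p := Lagrange.interpolate s id f
  have hp {x : ℝ} (hx : x ∈ s) : f x = p.eval x :=
    (Lagrange.eval_interpolate_at_node f Function.injective_id.injOn hx).symm
  have hpA : cfc f A = p.aeval A := by
    rw [← cfc_polynomial p A hA]
    exact cfc_congr fun x hx ↦ hp (by simp [s, hx])
  have hpB : cfc f B = p.aeval B := by
    rw [← cfc_polynomial p B hB]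
    exact cfc_congr fun x hx ↦ hp (by simp [s, hx])
  rw [hpA, hpB, aeval_mul_eq_mul_aeval p hV]

theorem cfc_fromBlocks_diagonal (f : ℝ → ℝ) {A : Matrix m m 𝕜} {B : Matrix n n 𝕜}
    (hA : A.IsHermitian) (hB : B.IsHermitian) :
    cfc f (fromBlocks A 0 0 B) = fromBlocks (cfc f A) 0 0 (cfc f B) := by
  have hAB : (fromBlocks A 0 0 B).IsHermitian := hA.fromBlocks (by simp) hB
  have hleft := cfc_mul_eq_mul_cfc f (V := fromRows 1 0) hAB hA
    (by simp [fromBlocks_mul_fromRows, fromRows_mul])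
  have hright := cfc_mul_eq_mul_cfc f (V := fromRows 0 1) hAB hB
    (by simp [fromBlocks_mul_fromRows, fromRows_mul])
  calc cfc f (fromBlocks A 0 0 B)
      = cfc f (fromBlocks A 0 0 B) * fromCols (fromRows 1 0) (fromRows 0 1) := by
        rw [fromCols_fromRows_eq_fromBlocks, fromBlocks_one, mul_one]
    _ = fromCols (fromRows (cfc f A) 0) (fromRows 0 (cfc f B)) := by
        rw [mul_fromCols, hleft, hright]
        simp [fromRows_mul]
    _ = fromBlocks (cfc f A) 0 0 (cfc f B) := fromCols_fromRows_eq_fromBlocks _ _ _ _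

theorem cfc_submatrix_equiv (f : ℝ → ℝ) (e : m ≃ n) {A : Matrix n n 𝕜} (hA : A.IsHermitian) :
    cfc f (A.submatrix e e) = (cfc f A).submatrix e e := by
  let φ : Matrix n n 𝕜 →⋆ₐ[ℝ] Matrix m m 𝕜 :=
    { (reindexAlgEquiv ℝ 𝕜 e.symm : Matrix n n 𝕜 →ₐ[ℝ] Matrix m m 𝕜) with
      map_star' := fun A ↦ (conjTranspose_submatrix A _ _).symm }
  exact (φ.map_cfc f A (finite_real_spectrum.continuousOn f) (continuous_id.matrix_submatrix e e) hA
    (hA.submatrix e)).symm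

open scoped MatrixOrder

variable {f : ℝ → ℝ} {A : Matrix n n 𝕜}

theorem spectrum_subset_Ioi (hA : A.PosDef) : spectrum ℝ A ⊆ Set.Ioi 0 :=
  fun _ hx ↦ (isStrictlyPositive_iff_posDef.2 hA).spectrum_pos hx

theorem posDef_cfc (hf : ∀ x ∈ Set.Ioi (0 : ℝ), 0 < f x) (hA : A.PosDef) : (cfc f A).PosDef :=
  isStrictlyPositive_iff_posDef.1 <|
    (cfc_isStrictlyPositive_iff f A (finite_real_spectrum.continuousOn f) hA.1).2
      fun x hx ↦ hf x (spectrum_subset_Ioi hA hx)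

theorem cfc_nonsing_inv (f : ℝ → ℝ) (hA : A.PosDef) : cfc f A⁻¹ = cfc (fun x ↦ f x⁻¹) A := by
  obtain ⟨u, rfl⟩ := hA.isUnit
  rw [← coe_units_inv]
  exact (cfc_comp_inv f u ((finite_real_spectrum.image _).continuousOn f) hA.1).symm

theorem smul_one_le_cfc_of_antitoneOn (hf : AntitoneOn f (Set.Ioi 0)) (hA : A.PosDef) {b : ℝ}
    (hb : 0 < b) (hAb : A ≤ b • 1) : f b • 1 ≤ cfc f A := by
  rw [← Algebra.algebraMap_eq_smul_one] at hAb ⊢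
  refine algebraMap_le_cfc f (f b) A (fun x hx ↦ ?_) (finite_real_spectrum.continuousOn f) hA.1
  exact hf (spectrum_subset_Ioi hA hx) hb ((le_algebraMap_iff_spectrum_le hA.1).1 hAb x hx)

end FunctionalCalculus

section Concavity

open scoped MatrixOrder

variable {m n : Type*} [Fintype m] [DecidableEq m] [Fintype n] [DecidableEq n]

namespace OperatorMonotone

variable {g : ℝ → ℝ}

theorem cfc_le_cfc (hg : OperatorMonotone g) {A B : Matrix n n ℂ} (hA : A.PosDef)
    (hAB : A ≤ B) : cfc g A ≤ cfc g B := by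
  let e := (Fintype.equivFin n).symm
  have hB := posDef_of_le hA hAB
  have h := hg _ _ _ (hA.submatrix e.injective) (hB.submatrix e.injective)
    ((le_iff.1 hAB).submatrix e)
  rw [cfc_submatrix_equiv g e hA.1, cfc_submatrix_equiv g e hB.1] at h
  exact (posSemidef_submatrix_equiv e).1 h

theorem conjTranspose_mul_cfc_mul_le (hg : OperatorMonotone g) {T : Matrix m m ℂ} (hT : T.PosDef)
    {V : Matrix m n ℂ} (hV : Vᴴ * V = 1) {c : ℝ} (hc : 1 < c) :
    Vᴴ * cfc g T * V ≤ cfc g (c • (Vᴴ * T * V)) := by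
  -- The dominating matrix `S` leaves the range of `V` invariant, so `cfc g S` is explicit there.
  obtain ⟨K, hTS⟩ := exists_le_mul_smul_mul_add_smul_one_sub hT.posSemidef hV hc
  set Z := c • (Vᴴ * T * V)
  set S := V * Z * Vᴴ + K • (1 - V * Vᴴ) with hSdef
  have hZ : Z.IsHermitian :=
    (isHermitian_conjTranspose_mul_mul V hT.1).smul (IsSelfAdjoint.all c)
  have hSV : S * V = V * Z := by
    simp only [hSdef, Matrix.add_mul, Matrix.smul_mul, Matrix.sub_mul, Matrix.one_mul,
      Matrix.mul_assoc, hV, Matrix.mul_one, sub_self, smul_zero, add_zero]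
  have hcorner : Vᴴ * cfc g S * V = cfc g Z := by
    rw [Matrix.mul_assoc, cfc_mul_eq_mul_cfc g (posDef_of_le hT hTS).1 hZ hSV,
      ← Matrix.mul_assoc, hV, Matrix.one_mul]
  have hmono := (le_iff.1 (hg.cfc_le_cfc hT hTS)).conjTranspose_mul_mul_same V
  rwa [Matrix.mul_sub, Matrix.sub_mul, hcorner] at hmono

theorem smul_cfc_add_smul_cfc_le_cfc_smul (hg : OperatorMonotone g) {A B : Matrix n n ℂ}
    (hA : A.PosDef) (hB : B.PosDef) {t : ℝ} (ht : t ∈ Set.Icc (0 : ℝ) 1) {c : ℝ} (hc : 1 < c) :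
    (1 - t) • cfc g A + t • cfc g B ≤ cfc g (c • ((1 - t) • A + t • B)) := by
  let V : Matrix (n ⊕ n) n ℂ := fromRows (√(1 - t) • 1) (√t • 1)
  have hcompress (X Y : Matrix n n ℂ) :
      Vᴴ * fromBlocks X 0 0 Y * V = (1 - t) • X + t • Y := by
    simp [V, conjTranspose_fromRows_eq_fromCols_conjTranspose, fromCols_mul_fromBlocks,
      fromCols_mul_fromRows, smul_smul, Real.mul_self_sqrt ht.1,
      Real.mul_self_sqrt (sub_nonneg.2 ht.2)]
  have hV : Vᴴ * V = 1 := by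
    simpa [fromBlocks_one, ← add_smul] using hcompress 1 1
  have h := hg.conjTranspose_mul_cfc_mul_le (posDef_fromBlocks_diagonal hA hB) hV hc
  rwa [cfc_fromBlocks_diagonal g hA.1 hB.1, hcompress, hcompress] at h

theorem cfc_smul_le_pow_three_smul_cfc (hg : OperatorMonotone g)
    (hg₀ : ∀ x ∈ Set.Ioi (0 : ℝ), 0 ≤ g x) {A : Matrix n n ℂ} (hA : A.PosDef) {c : ℝ}
    (hc : 1 < c) : cfc g (c • A) ≤ c ^ 3 • cfc g A := by
  have hc₀ : 0 < c := one_pos.trans hc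
  -- `t` and `s` are chosen so that `(1 - t) * c ^ 3 = 1` and `c * ((1 - t) * c + t * s) = 1`.
  let t := 1 - (c ^ 3)⁻¹
  let s := (1 - c⁻¹) / (c * t)
  have ht : 0 < t := sub_pos.2 (inv_lt_one_of_one_lt₀ (one_lt_pow₀ hc three_ne_zero))
  have hs : 0 < s := div_pos (sub_pos.2 (inv_lt_one_of_one_lt₀ hc)) (mul_pos hc₀ ht)
  have hts : c • ((1 - t) • c • A + t • s • A) = A := by
    have : c * ((1 - t) * c + t * s) = 1 := by
      have : t * s = c⁻¹ * (1 - c⁻¹) := by simp only [s]; field_simp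
      rw [this]; simp only [t]; field_simp; ring
    rw [smul_smul, smul_smul, ← add_smul, smul_smul, this, one_smul]
  have hsA : 0 ≤ cfc g (s • A) :=
    cfc_nonneg fun x hx ↦ hg₀ x (spectrum_subset_Ioi (hA.smul hs) hx)
  have hconcave := hg.smul_cfc_add_smul_cfc_le_cfc_smul (hA.smul hc₀) (hA.smul hs)
    ⟨ht.le, sub_le_self _ (by positivity)⟩ hc
  rw [hts] at hconcave
  calc cfc g (c • A) = c ^ 3 • (1 - t) • cfc g (c • A) := by
        simp [t, smul_smul, hc₀.ne']
    _ ≤ c ^ 3 • ((1 - t) • cfc g (c • A) + t • cfc g (s • A)) := by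
        gcongr; exact le_add_of_nonneg_right (smul_nonneg ht.le hsA)
    _ ≤ c ^ 3 • cfc g A := by gcongr

theorem smul_cfc_add_smul_cfc_le_cfc (hg : OperatorMonotone g)
    (hg₀ : ∀ x ∈ Set.Ioi (0 : ℝ), 0 ≤ g x) {A B : Matrix n n ℂ} (hA : A.PosDef) (hB : B.PosDef)
    {t : ℝ} (ht : t ∈ Set.Icc (0 : ℝ) 1) :
    (1 - t) • cfc g A + t • cfc g B ≤ cfc g ((1 - t) • A + t • B) := by
  set C := (1 - t) • A + t • B
  have hbound (c : ℝ) (hc : 1 < c) : (1 - t) • cfc g A + t • cfc g B ≤ c ^ 3 • cfc g C :=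
    (hg.smul_cfc_add_smul_cfc_le_cfc_smul hA hB ht hc).trans
      (hg.cfc_smul_le_pow_three_smul_cfc hg₀ (posDef_one_sub_smul_add_smul hA hB ht) hc)
  have hlim : Filter.Tendsto (fun c : ℝ ↦ c ^ 3 • cfc g C) (nhdsWithin 1 (Set.Ioi 1))
      (nhds (cfc g C)) := by
    have : Continuous fun c : ℝ ↦ c ^ 3 • cfc g C := by fun_prop
    simpa using (this.tendsto 1).mono_left nhdsWithin_le_nhds
  exact ge_of_tendsto hlim (eventually_nhdsWithin_of_forall hbound)

end OperatorMonotone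

end Concavity

section HarmonicMean

open scoped MatrixOrder

variable {n : ℕ} {A B : Matrix (Fin n) (Fin n) ℂ} {t : ℝ}

theorem inv_wharm (hA : A.PosDef) (hB : B.PosDef) (ht : t ∈ Set.Icc (0 : ℝ) 1) :
    (wharm t A B)⁻¹ = (1 - t) • A⁻¹ + t • B⁻¹ :=
  inv_inv_of_posDef (posDef_one_sub_smul_add_smul hA.inv hB.inv ht)

theorem posDef_wharm (hA : A.PosDef) (hB : B.PosDef) (ht : t ∈ Set.Icc (0 : ℝ) 1) :
    (wharm t A B).PosDef :=
  (posDef_one_sub_smul_add_smul hA.inv hB.inv ht).inv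

theorem wharm_le_warith (hA : A.PosDef) (hB : B.PosDef) (ht : t ∈ Set.Icc (0 : ℝ) 1) :
    wharm t A B ≤ warith t A B := by
  simpa only [wharm, warith, inv_inv_of_posDef hA, inv_inv_of_posDef hB] using
    inv_one_sub_smul_add_smul_le hA.inv hB.inv ht

theorem exists_le_wharm_eq (hA : A.PosDef) (hAB : A ≤ B) (ht : 0 < t) :
    ∃ C : Matrix (Fin n) (Fin n) ℂ, C.PosDef ∧ C ≤ B ∧ wharm t B C = A := by
  have hB := posDef_of_le hA hAB
  let K := B⁻¹ + t⁻¹ • (A⁻¹ - B⁻¹)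
  have hBK : B⁻¹ ≤ K := le_add_of_nonneg_right <|
    smul_nonneg (inv_pos.2 ht).le (sub_nonneg.2 (inv_le_inv_of_posDef hA hAB))
  have hK : K.PosDef := posDef_of_le hB.inv hBK
  refine ⟨K⁻¹, hK.inv, ?_, ?_⟩
  · simpa only [inv_inv_of_posDef hB] using inv_le_inv_of_posDef hB.inv hBK
  · have hcomb : (1 - t) • B⁻¹ + t • K = A⁻¹ := by
      simp only [K, smul_add, smul_smul, mul_inv_cancel₀ ht.ne']
      module
    rw [wharm, inv_inv_of_posDef hK, hcomb, inv_inv_of_posDef hA]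

end HarmonicMean

namespace OperatorAntitone

open scoped MatrixOrder

variable {f : ℝ → ℝ}

theorem antitoneOn (hf : OperatorAntitone f) : AntitoneOn f (Set.Ioi 0) := by
  intro x hx y hy hxy
  have hpos {z : ℝ} (hz : 0 < z) : (algebraMap ℝ (Matrix (Fin 1) (Fin 1) ℂ) z).PosDef := by
    rw [Algebra.algebraMap_eq_smul_one]
    exact PosDef.one.smul hz
  have h := hf 1 _ _ (hpos hx) (hpos hy) (le_iff.1 (algebraMap_mono _ hxy))
  rw [MLE, cfc_algebraMap, cfc_algebraMap, Algebra.algebraMap_eq_smul_one,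
    Algebra.algebraMap_eq_smul_one] at h
  simpa using h.diag_nonneg (i := 0)

theorem operatorMonotone_comp_inv (hf : OperatorAntitone f) :
    OperatorMonotone fun x ↦ f x⁻¹ := by
  intro n A B hA hB hAB
  rw [← cfc_nonsing_inv f hA, ← cfc_nonsing_inv f hB]
  exact hf n _ _ hB.inv hA.inv (inv_le_inv_of_posDef hA hAB)

theorem wharm_cfc_le_cfc_wharm (hf : OperatorAntitone f) (hf₀ : ∀ x ∈ Set.Ioi (0 : ℝ), 0 < f x)
    {n : ℕ} {A B : Matrix (Fin n) (Fin n) ℂ} (hA : A.PosDef) (hB : B.PosDef) {t : ℝ}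
    (ht : t ∈ Set.Icc (0 : ℝ) 1) : wharm t (cfc f A) (cfc f B) ≤ cfc f (wharm t A B) := by
  have hcfc {C : Matrix (Fin n) (Fin n) ℂ} (hC : C.PosDef) :
      cfc (fun x ↦ f x⁻¹) C⁻¹ = cfc f C := by
    rw [← cfc_nonsing_inv f hC.inv, inv_inv_of_posDef hC]
  calc wharm t (cfc f A) (cfc f B)
      ≤ warith t (cfc f A) (cfc f B) := wharm_le_warith (posDef_cfc hf₀ hA) (posDef_cfc hf₀ hB) ht
    _ = (1 - t) • cfc (fun x ↦ f x⁻¹) A⁻¹ + t • cfc (fun x ↦ f x⁻¹) B⁻¹ := by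
        rw [hcfc hA, hcfc hB, warith]
    _ ≤ cfc (fun x ↦ f x⁻¹) ((1 - t) • A⁻¹ + t • B⁻¹) :=
        hf.operatorMonotone_comp_inv.smul_cfc_add_smul_cfc_le_cfc
          (fun x hx ↦ (hf₀ _ (Set.mem_Ioi.2 (inv_pos.2 hx))).le) hA.inv hB.inv ht
    _ = cfc f (wharm t A B) := by
        rw [← inv_wharm hA hB ht, hcfc (posDef_wharm hA hB ht)]

end OperatorAntitone

section Converse

open scoped MatrixOrder

variable {f : ℝ → ℝ} {n : ℕ} {A B : Matrix (Fin n) (Fin n) ℂ}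

theorem inv_cfc_le_of_wharm_cfc_le (hf₀ : ∀ x ∈ Set.Ioi (0 : ℝ), 0 < f x)
    (hanti : AntitoneOn f (Set.Ioi 0))
    (hharm : ∀ A B : Matrix (Fin n) (Fin n) ℂ, A.PosDef → B.PosDef → ∀ t ∈ Set.Icc (0 : ℝ) 1,
      wharm t (cfc f A) (cfc f B) ≤ cfc f (wharm t A B))
    (hA : A.PosDef) (hAB : A ≤ B) {b : ℝ} (hb : 0 < b) (hBb : B ≤ b • 1)
    {t : ℝ} (ht : t ∈ Set.Ioc (0 : ℝ) 1) :
    (cfc f A)⁻¹ ≤ (1 - t) • (cfc f B)⁻¹ + t • (f b • 1)⁻¹ := by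
  obtain ⟨C, hC, hCB, rfl⟩ := exists_le_wharm_eq hA hAB ht.1
  have hB := posDef_of_le hA hAB
  have ht' := Set.Ioc_subset_Icc_self ht
  have hfB := posDef_cfc hf₀ hB
  have hfC := posDef_cfc hf₀ hC
  calc (cfc f (wharm t B C))⁻¹
      ≤ (wharm t (cfc f B) (cfc f C))⁻¹ :=
        inv_le_inv_of_posDef (posDef_wharm hfB hfC ht') (hharm B C hB hC t ht')
    _ = (1 - t) • (cfc f B)⁻¹ + t • (cfc f C)⁻¹ := inv_wharm hfB hfC ht'
    _ ≤ (1 - t) • (cfc f B)⁻¹ + t • (f b • 1)⁻¹ := by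
        have hinv := inv_le_inv_of_posDef (PosDef.one.smul (hf₀ b hb))
          (smul_one_le_cfc_of_antitoneOn hanti hC hb (hCB.trans hBb))
        have := ht.1.le
        gcongr

theorem cfc_le_cfc_of_wharm_cfc_le (hf₀ : ∀ x ∈ Set.Ioi (0 : ℝ), 0 < f x)
    (hanti : AntitoneOn f (Set.Ioi 0))
    (hharm : ∀ A B : Matrix (Fin n) (Fin n) ℂ, A.PosDef → B.PosDef → ∀ t ∈ Set.Icc (0 : ℝ) 1,
      wharm t (cfc f A) (cfc f B) ≤ cfc f (wharm t A B))
    (hA : A.PosDef) (hAB : A ≤ B) : cfc f B ≤ cfc f A := by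
  have hB := posDef_of_le hA hAB
  have hfA := posDef_cfc hf₀ hA
  have hfB := posDef_cfc hf₀ hB
  obtain ⟨b, hb, hBb⟩ := exists_pos_le_smul_one hB.1
  have hlim : Filter.Tendsto (fun t : ℝ ↦ (1 - t) • (cfc f B)⁻¹ + t • (f b • 1)⁻¹)
      (nhdsWithin 0 (Set.Ioi 0)) (nhds (cfc f B)⁻¹) := by
    have : Continuous fun t : ℝ ↦ (1 - t) • (cfc f B)⁻¹ + t • (f b • 1)⁻¹ := by fun_prop
    simpa using (this.tendsto 0).mono_left nhdsWithin_le_nhds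
  have hinv : (cfc f A)⁻¹ ≤ (cfc f B)⁻¹ := by
    refine ge_of_tendsto hlim ?_
    filter_upwards [Ioc_mem_nhdsGT one_pos] with t ht
    exact inv_cfc_le_of_wharm_cfc_le hf₀ hanti hharm hA hAB hb hBb ht
  simpa only [inv_inv_of_posDef hfA, inv_inv_of_posDef hfB] using
    inv_le_inv_of_posDef hfA.inv hinv

end Converse

theorem stmt_12_general (f : ℝ → ℝ) (hf₀ : ∀ x ∈ Set.Ioi (0 : ℝ), f x ∈ Set.Ioi (0 : ℝ)) :
    OperatorAntitone f ↔
      (AntitoneOn f (Set.Ioi 0) ∧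
        ∀ (n : ℕ) (A B : Matrix (Fin n) (Fin n) ℂ), A.PosDef → B.PosDef →
          ∀ t ∈ Set.Icc (0 : ℝ) 1,
            MLE (wharm t (cfc f A) (cfc f B)) (cfc f (wharm t A B))) := by
  refine ⟨fun h ↦ ⟨h.antitoneOn, fun n A B hA hB t ht ↦ ?_⟩, fun ⟨hanti, hharm⟩ ↦ ?_⟩
  · exact h.wharm_cfc_le_cfc_wharm hf₀ hA hB ht
  · exact fun n A B hA _ hAB ↦ cfc_le_cfc_of_wharm_cfc_le hf₀ hanti (hharm n) hA hAB

theorem stmt_12 (f : ℝ → ℝ) (hf : ContinuousOn f (Set.Ioi 0))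
    (hf' : ∀ x ∈ Set.Ioi (0:ℝ), f x ∈ Set.Ioi (0:ℝ)) :
    OperatorAntitone f ↔
      (AntitoneOn f (Set.Ioi 0) ∧
        ∀ (n : ℕ) (A B : Matrix (Fin n) (Fin n) ℂ), A.PosDef → B.PosDef →
          ∀ t ∈ Set.Icc (0:ℝ) 1,
            MLE (wharm t (cfc f A) (cfc f B)) (cfc f (wharm t A B))) :=
  stmt_12_general f hf'
end

section
/- For every n ∈ ℕ, all n×n positive definite complex matrices A, B, every r ∈ [-1,0], and every t ∈ [0,1], one has (A !_t B)^r ≥ A^r #_t B^r ≥ A^r !_t B^r in the Loewner order. -/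
open Matrix
open scoped ComplexOrder

/-!
Everything happens in a unital C⋆-algebra. Applying the functional calculus to the scalar inequality
`x ^ t ≤ (1 - t) + t * x` at `a^{-1/2} b a^{-1/2}` and conjugating by `a^{1/2}` gives
`a #_t b ≤ (1 - t) a + t b`. The geometric mean commutes with inversion, which reverses the order,
so this inequality at `a⁻¹, b⁻¹` also yields `a !_t b ≤ a #_t b`. Finally
`(a !_t b) ^ r = ((1 - t) a⁻¹ + t b⁻¹) ^ (-r)`, and since `-r ∈ [0, 1]` operator concavity of
`x ↦ x ^ (-r)` bounds this below by `(1 - t) a ^ r + t b ^ r`, hence by `a ^ r #_t b ^ r`.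
-/

open Set CFC Ring

section CStarAlgebra

variable {A : Type*} [CStarAlgebra A] [PartialOrder A] [StarOrderedRing A] {a b : A} {t : ℝ}

/-- The `t`-weighted harmonic mean `a !_t b` in a C⋆-algebra; it is meaningful for strictly positive
elements, since `Ring.inverse` is zero off the units. -/
noncomputable def harmonicMean (t : ℝ) (a b : A) : A := ((1 - t) • a⁻¹ʳ + t • b⁻¹ʳ)⁻¹ʳ

/-- The `t`-weighted geometric mean `a #_t b = a^{1/2} (a^{-1/2} b a^{-1/2})^t a^{1/2}` in a
C⋆-algebra, for `a` strictly positive. Here `conjSqrt c x = c^{1/2} x c^{1/2}`. -/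
noncomputable def geometricMean (t : ℝ) (a b : A) : A := conjSqrt a (conjSqrt a⁻¹ʳ b ^ t)

lemma rpow_ringInverse (ha : IsStrictlyPositive a) (s : ℝ) : a⁻¹ʳ ^ s = a ^ (-s) := by
  rw [inverse_eq_rpow_neg_one, rpow_rpow a _ _ (by norm_num), neg_one_mul]

lemma ringInverse_rpow (ha : IsStrictlyPositive a) (s : ℝ) : (a ^ s)⁻¹ʳ = a⁻¹ʳ ^ s := by
  rw [rpow_ringInverse ha]
  exact Ring.inverse_unit (ha.isUnit.unit.cfcRpow s)

lemma conjSqrt_nonneg {c : A} (ha : 0 ≤ a) : 0 ≤ conjSqrt c a := by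
  simpa using conjSqrt_monotone ha

lemma isStrictlyPositive_one_sub_smul_add_smul (ha : IsStrictlyPositive a)
    (hb : IsStrictlyPositive b) (ht : t ∈ Icc (0 : ℝ) 1) :
    IsStrictlyPositive ((1 - t) • a + t • b) :=
  CStarAlgebra.convexOn_ringInverse.1 ha hb (sub_nonneg.mpr ht.2) ht.1 (sub_add_cancel 1 t)

lemma real_rpow_le_one_sub_add_mul {x : ℝ} (hx : 0 ≤ x) (ht : t ∈ Icc (0 : ℝ) 1) :
    x ^ t ≤ 1 - t + t * x := by
  simpa using Real.geom_mean_le_arith_mean2_weighted (sub_nonneg.mpr ht.2) ht.1 zero_le_one hx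
    (sub_add_cancel 1 t)

lemma rpow_le_one_sub_smul_one_add_smul (ha : 0 ≤ a) (ht : t ∈ Icc (0 : ℝ) 1) :
    a ^ t ≤ (1 - t) • 1 + t • a := by
  have hcont : ContinuousOn (fun x : ℝ => x ^ t) (spectrum ℝ a) :=
    (Real.continuous_rpow_const ht.1).continuousOn
  calc a ^ t = cfc (fun x : ℝ => x ^ t) a := rpow_eq_cfc_real
    _ ≤ cfc (fun x : ℝ => 1 - t + t * x) a :=
      cfc_mono (fun x hx => real_rpow_le_one_sub_add_mul (spectrum_nonneg_of_nonneg ha hx) ht) hcont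
    _ = (1 - t) • 1 + t • a := by
      rw [cfc_const_add (1 - t) (fun x => t * x) a, cfc_const_mul_id t a,
        Algebra.algebraMap_eq_smul_one]

theorem geometricMean_le_one_sub_smul_add_smul (ha : IsStrictlyPositive a) (hb : 0 ≤ b)
    (ht : t ∈ Icc (0 : ℝ) 1) : geometricMean t a b ≤ (1 - t) • a + t • b := by
  calc geometricMean t a b
      ≤ conjSqrt a ((1 - t) • 1 + t • conjSqrt a⁻¹ʳ b) :=
        conjSqrt_le_conjSqrt (rpow_le_one_sub_smul_one_add_smul (conjSqrt_nonneg hb) ht)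
    _ = (1 - t) • a + t • b := by
        rw [map_add, map_smul, map_smul, conjSqrt_one a, conjSqrt_conjSqrt_ringInverse a b]

lemma isStrictlyPositive_geometricMean (ha : IsStrictlyPositive a) (hb : IsStrictlyPositive b)
    (t : ℝ) : IsStrictlyPositive (geometricMean t a b) := by
  have hconj := (isStrictlyPositive_conjSqrt_iff a⁻¹ʳ b ha.ringInverse).mpr hb
  exact (isStrictlyPositive_conjSqrt_iff a _ ha).mpr (hconj.rpow _ t)

lemma isStrictlyPositive_harmonicMean (ha : IsStrictlyPositive a) (hb : IsStrictlyPositive b)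
    (ht : t ∈ Icc (0 : ℝ) 1) : IsStrictlyPositive (harmonicMean t a b) :=
  (isStrictlyPositive_one_sub_smul_add_smul ha.ringInverse hb.ringInverse ht).ringInverse

lemma ringInverse_geometricMean (ha : IsStrictlyPositive a) (hb : IsStrictlyPositive b) (t : ℝ) :
    (geometricMean t a b)⁻¹ʳ = geometricMean t a⁻¹ʳ b⁻¹ʳ := by
  have hconj := (isStrictlyPositive_conjSqrt_iff a⁻¹ʳ b ha.ringInverse).mpr hb
  rw [geometricMean, ringInverse_conjSqrt a _ ha, ringInverse_rpow hconj,
    ringInverse_conjSqrt a⁻¹ʳ b ha.ringInverse, geometricMean]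

theorem harmonicMean_le_geometricMean (ha : IsStrictlyPositive a) (hb : IsStrictlyPositive b)
    (ht : t ∈ Icc (0 : ℝ) 1) : harmonicMean t a b ≤ geometricMean t a b := by
  have ha' := ha.ringInverse
  have hb' := hb.ringInverse
  calc harmonicMean t a b ≤ (geometricMean t a⁻¹ʳ b⁻¹ʳ)⁻¹ʳ :=
        CStarAlgebra.ringInverse_le_ringInverse
          (geometricMean_le_one_sub_smul_add_smul ha' hb'.nonneg ht)
          (isStrictlyPositive_geometricMean ha' hb' t)
    _ = geometricMean t a b := by
        rw [ringInverse_geometricMean ha' hb', inverse_inverse ha.isUnit, inverse_inverse hb.isUnit]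

theorem one_sub_smul_rpow_add_smul_rpow_le_harmonicMean_rpow (ha : IsStrictlyPositive a)
    (hb : IsStrictlyPositive b) {r : ℝ} (hr : r ∈ Icc (-1 : ℝ) 0) (ht : t ∈ Icc (0 : ℝ) 1) :
    (1 - t) • a ^ r + t • b ^ r ≤ harmonicMean t a b ^ r := by
  have ha' := ha.ringInverse
  have hb' := hb.ringInverse
  have hr' : -r ∈ Icc (0 : ℝ) 1 := ⟨neg_nonneg.mpr hr.2, neg_le.mp hr.1⟩
  calc (1 - t) • a ^ r + t • b ^ r
      = (1 - t) • a⁻¹ʳ ^ (-r) + t • b⁻¹ʳ ^ (-r) := by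
        rw [rpow_ringInverse ha, rpow_ringInverse hb, neg_neg]
    _ ≤ ((1 - t) • a⁻¹ʳ + t • b⁻¹ʳ) ^ (-r) :=
        (concaveOn_rpow hr').2 ha'.nonneg hb'.nonneg (sub_nonneg.mpr ht.2) ht.1 (sub_add_cancel 1 t)
    _ = harmonicMean t a b ^ r :=
        (rpow_ringInverse (isStrictlyPositive_one_sub_smul_add_smul ha' hb' ht) r).symm

theorem stmt_18_general (ha : IsStrictlyPositive a) (hb : IsStrictlyPositive b)
    {r : ℝ} (hr : r ∈ Icc (-1 : ℝ) 0) (ht : t ∈ Icc (0 : ℝ) 1) :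
    geometricMean t (a ^ r) (b ^ r) ≤ harmonicMean t a b ^ r ∧
      harmonicMean t (a ^ r) (b ^ r) ≤ geometricMean t (a ^ r) (b ^ r) :=
  ⟨(geometricMean_le_one_sub_smul_add_smul (ha.rpow _ r) rpow_nonneg ht).trans
      (one_sub_smul_rpow_add_smul_rpow_le_harmonicMean_rpow ha hb hr ht),
    harmonicMean_le_geometricMean (ha.rpow _ r) (hb.rpow _ r) ht⟩

end CStarAlgebra

open scoped MatrixOrder Matrix.Norms.L2Operator

section Matrix

variable {n : ℕ} {A B : Matrix (Fin n) (Fin n) ℂ}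

lemma mpow_eq_rpow (hA : 0 ≤ A) (r : ℝ) : mpow A r = A ^ r :=
  (rpow_eq_cfc_real hA).symm

lemma wharm_eq_harmonicMean (t : ℝ) (A B : Matrix (Fin n) (Fin n) ℂ) :
    wharm t A B = harmonicMean t A B := by
  simp only [wharm, harmonicMean, nonsing_inv_eq_ringInverse]

lemma wgeom_eq_geometricMean (hA : IsStrictlyPositive A) (hB : 0 ≤ B) (t : ℝ) :
    wgeom t A B = geometricMean t A B := by
  rw [geometricMean, ← mpow_eq_rpow (conjSqrt_nonneg hB), conjSqrt_apply, conjSqrt_apply,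
    sqrt_eq_rpow, sqrt_eq_rpow, rpow_ringInverse hA, ← mpow_eq_rpow hA.nonneg,
    ← mpow_eq_rpow hA.nonneg, wgeom]

end Matrix

theorem stmt_18 (n : ℕ) (A B : Matrix (Fin n) (Fin n) ℂ)
    (hA : A.PosDef) (hB : B.PosDef)
    (r : ℝ) (hr : r ∈ Set.Icc (-1:ℝ) 0) (t : ℝ) (ht : t ∈ Set.Icc (0:ℝ) 1) :
    MLE (wgeom t (mpow A r) (mpow B r)) (mpow (wharm t A B) r) ∧
      MLE (wharm t (mpow A r) (mpow B r)) (wgeom t (mpow A r) (mpow B r)) := by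
  have hA' := hA.isStrictlyPositive
  have hB' := hB.isStrictlyPositive
  rw [wharm_eq_harmonicMean, wharm_eq_harmonicMean, mpow_eq_rpow hA'.nonneg,
    mpow_eq_rpow hB'.nonneg, mpow_eq_rpow (isStrictlyPositive_harmonicMean hA' hB' ht).nonneg,
    wgeom_eq_geometricMean (hA'.rpow _ r) rpow_nonneg]
  exact stmt_18_general hA' hB' hr ht
end
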